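/- Assume F = ℚ, E = ℚ(s) with s ∈ E, s² = −3, and set ζ := (−1 + s)/2 ∈ E (a primitive third root of unity). Assume b = 1 and a = ζ or a = ζ², with a not a norm from L. Then every special unitary g = g(l0,l1,l2) of finite order in the multiplicative monoid of 3×3 matrices over L is a scalar cube root of unity: l1 = l2 = 0 and l0 ∈ {1, ζ, ζ²} (so g = l0·I). -/

import Mathlib

open Matrix NumberField IsDedekindDomain

noncomputable section

section Defs

variable {L : Type*} [Field L]

/-- The matrix `g(l0,l1,l2)` of the cyclic presentation `D = L ⊕ Lz ⊕ Lz²`. -/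
def gmat (ρ : L → L) (a l0 l1 l2 : L) : Matrix (Fin 3) (Fin 3) L :=
  !![l0, l1, l2;
     a * ρ l2, ρ l0, ρ l1;
     a * ρ (ρ l1), a * ρ (ρ l2), ρ (ρ l0)]

/-- The norm `N_{L/E}(x) = x·ρ(x)·ρ²(x)`. -/
def NormLE (ρ : L → L) (x : L) : L := x * ρ x * ρ (ρ x)

/-- The trace `Tr_{L/E}(x) = x + ρ(x) + ρ²(x)`. -/
def TrLE (ρ : L → L) (x : L) : L := x + ρ x + ρ (ρ x)

/-- The unitary conditions (U1) and (U2) on the coefficients `(l0,l1,l2)`. -/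
def IsUnitaryCoeffs (ρ τ : L → L) (a b l0 l1 l2 : L) : Prop :=
  l0 * τ l0 + ρ b * (l1 * τ l1) + ρ b * ρ (ρ b) * (l2 * τ l2) = 1 ∧
  a * τ l0 * ρ l2 + ρ b * τ l1 * ρ l0 + ρ b * ρ (ρ b) * τ l2 * ρ l1 = 0

/-- The unitary conditions together with the determinant condition (Det). -/
def IsSpecialUnitaryCoeffs (ρ τ : L → L) (a b l0 l1 l2 : L) : Prop :=
  IsUnitaryCoeffs ρ τ a b l0 l1 l2 ∧
  NormLE ρ l0 + a * NormLE ρ l1 + a ^ 2 * NormLE ρ l2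
    - a * TrLE ρ (l0 * ρ l1 * ρ (ρ l2)) = 1

/-- The involution of the second kind, on coefficients, realized as a matrix:
`α(g(l0,l1,l2)) = g(τ l0, a⁻¹·b·ρ²(b)·ρ(τ l2), a⁻¹·b·ρ²(τ l1))`. -/
def alphaMat (ρ τ : L → L) (a b l0 l1 l2 : L) : Matrix (Fin 3) (Fin 3) L :=
  gmat ρ a (τ l0) (a⁻¹ * b * ρ (ρ b) * ρ (τ l2)) (a⁻¹ * b * ρ (ρ (τ l1)))

end Defs

/-!
The matrices `gmat ρ a l0 l1 l2` form the cyclic algebra `D = (L/E, ρ, a)` of degree three over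
`E = ℚ(ζ₃)`. It is a division algebra because `a` is not a norm (`eq_zero_of_det`); this rests on a
direct argument with the semilinear map "multiplication by `z`" (`cubic_dep`).

Let `g ∈ D` have finite order and reduced norm `1`. Its characteristic polynomial `f` is a monic
cubic over `E` with constant term `-1`. If `f` has a root `x ∈ E`, then `g - x` is singular, hence
zero, and `g` is a scalar with `x³ = 1`. Otherwise `f` is irreducible, hence is the minimal
polynomial of `g` and divides some `X ^ n - 1`. A root of `f` is then a root of unity generating an
extension of `ℚ` of degree six that contains `ζ₃`; its order divides `18`, which forces
`f = X ^ 3 - 1` (`no_irred`), a contradiction.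
-/

section Helpers

open Polynomial

lemma dvd_eighteen {N : ℕ} (h3 : 3 ∣ N) (h : N.totient ∣ 6) : N ∣ 18 := by
  have hN : N ≠ 0 := by rintro rfl; simp at h
  obtain ⟨k, m, hm, rfl⟩ := Nat.exists_eq_pow_mul_and_not_dvd hN 3 (by norm_num)
  obtain _ | k := k
  · simp_all
  have hc : Nat.Coprime (3 ^ (k + 1)) m :=
    ((Nat.Prime.coprime_iff_not_dvd Nat.prime_three).2 hm).pow_left _
  rw [Nat.totient_mul hc, Nat.totient_prime_pow_succ Nat.prime_three] at h
  have h1 : 3 ^ k * m.totient ∣ 3 := by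
    have : 2 * (3 ^ k * m.totient) ∣ 2 * 3 := by convert h using 1; ring
    exact Nat.dvd_of_mul_dvd_mul_left (by norm_num) this
  have hk : k ≤ 1 := by
    have := (Nat.pow_dvd_pow_iff_le_right (x := 3) (k := k) (l := 1) (by norm_num)).1
      (by simpa using (dvd_of_mul_right_dvd h1))
    exact this
  have hm1 : m.totient = 1 := by
    rcases (Nat.dvd_prime Nat.prime_three).1 (dvd_of_mul_left_dvd h1) with h | h
    · exact h
    · rcases le_or_gt m 2 with h2 | h2
      · interval_cases m <;> simp_all
      · have := Nat.totient_even h2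
        rw [h] at this; exact absurd this (by decide)
  have hm2 : m ∣ 2 := by
    rcases Nat.totient_eq_one_iff.1 hm1 with rfl | rfl <;> norm_num
  have : 3 ^ (k + 1) ∣ 3 ^ 2 :=
    pow_dvd_pow 3 (show k + 1 ≤ 2 by omega)
  exact mul_dvd_mul this hm2

/-- The algebra structure is left to unification: a field such as `AdjoinRoot f` of characteristic
zero carries two `ℚ`-algebra structures that are not definitionally equal. -/
lemma totient_dvd_finrank {K : Type*} [Field K] [CharZero K] {_ : Algebra ℚ K}
    [FiniteDimensional ℚ K] {N : ℕ} (hN : 0 < N) {ω : K} (hω : IsPrimitiveRoot ω N) :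
    N.totient ∣ Module.finrank ℚ K := by
  have h : minpoly ℚ ω = cyclotomic N ℚ := by
    refine (minpoly.eq_of_irreducible_of_monic (cyclotomic.irreducible_rat hN) ?_
      (cyclotomic.monic N ℚ)).symm
    rw [aeval_def, ← eval_map, map_cyclotomic]
    exact hω.isRoot_cyclotomic hN
  rw [← natDegree_cyclotomic N ℚ, ← h]
  exact minpoly.degree_dvd (IsIntegral.of_finite ℚ ω)

/-- Let `T` be `ρ`-semilinear with `T³ = a`. If a nonzero vector `v` satisfies a nontrivial linear
relation with `T v` and `T² v`, then `a` is a norm: a relation `T v = x v` gives `a = N(x)`, and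
a minimal relation `T² v = α v + β T v` gives `a = N(-β)`, on comparing `T³ v` with `a v`. -/
lemma cubic_dep {L V : Type*} [Field L] [AddCommGroup V] [Module L V]
    (ρ : L →+* L) (a : L) (ha : ρ a = a) (T : V →ₛₗ[ρ] V) (hT : ∀ v, T (T (T v)) = a • v)
    (v : V) (hv : v ≠ 0) (c₀ c₁ c₂ : L) (hc : ¬ (c₀ = 0 ∧ c₁ = 0 ∧ c₂ = 0))
    (h : c₀ • v + c₁ • T v + c₂ • T (T v) = 0) : ∃ x : L, x * ρ x * ρ (ρ x) = a := by
  have key : ∀ d₀ d₁ : L, ¬ (d₀ = 0 ∧ d₁ = 0) → d₀ • v + d₁ • T v = 0 →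
      ∃ x : L, x * ρ x * ρ (ρ x) = a := by
    intro d₀ d₁ hd hdv
    by_cases h1 : d₁ = 0
    · subst h1
      simp_all
    have hTv : T v = (-(d₀ / d₁)) • v := by
      have : d₁ • T v = (-d₀) • v := by rw [neg_smul]; exact eq_neg_of_add_eq_zero_right hdv
      rw [← inv_smul_smul₀ h1 (T v), this, smul_smul]; congr 1; field_simp
    refine ⟨-(d₀ / d₁), ?_⟩
    generalize -(d₀ / d₁) = x at hTv
    have h3 := hT v
    rw [hTv, T.map_smulₛₗ, hTv, smul_smul, T.map_smulₛₗ, hTv, smul_smul] at h3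
    have := smul_left_injective L hv h3
    simp only [map_mul] at this
    rw [← this]; ring
  by_cases h2 : c₂ = 0
  · subst h2
    exact key c₀ c₁ (by simpa using hc) (by simpa using h)
  obtain ⟨α, β, hTT⟩ : ∃ α β : L, T (T v) = α • v + β • T v := by
    refine ⟨-(c₀ / c₂), -(c₁ / c₂), ?_⟩
    have : c₂ • T (T v) = (-c₀) • v + (-c₁) • T v := by
      rw [eq_neg_of_add_eq_zero_right h]; module
    rw [← inv_smul_smul₀ h2 (T (T v)), this, smul_add, smul_smul, smul_smul]
    congr 2 <;> field_simp
  have h3 := hT v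
  rw [hTT, map_add, T.map_smulₛₗ, T.map_smulₛₗ, hTT] at h3
  have h4 : (ρ β * α - a) • v + (ρ α + ρ β * β) • T v = 0 := by
    rw [← sub_eq_zero] at h3
    rw [← h3]; module
  by_cases h5 : ρ β * α - a = 0 ∧ ρ α + ρ β * β = 0
  · obtain ⟨h5, h6⟩ := h5
    refine ⟨-β, ?_⟩
    have h7 : ρ α = - (ρ β * β) := by linear_combination h6
    have h8 : ρ (ρ β) * ρ α = a := by
      rw [← map_mul, show ρ β * α = a by linear_combination h5, ha]
    rw [h7] at h8
    simp only [map_neg]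
    linear_combination h8
  · exact key _ _ h5 h4

/-- There is no element of finite order and norm `1` that generates a cubic field `K` over
`E = ℚ(ζ₃)`. Since `[K : ℚ] = 6`, such an element `μ` satisfies `μ ^ 18 = 1`, so `μ ^ 3` is a sixth
root of unity and lies in `E`. Its minimal polynomial is then `X ^ 3 - e` with `e = 1` by the norm
condition, and this has the root `1`. -/
lemma no_irred {E : Type*} [Field E] [Algebra ℚ E] (hE : Module.finrank ℚ E = 2)
    (ζ : E) (hζ : ζ ^ 2 + ζ + 1 = 0) (f : E[X]) (hf : Irreducible f) (hm : f.Monic)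
    (hd : f.natDegree = 3) (h0 : f.coeff 0 = -1) (n : ℕ) (hn : 0 < n)
    (hdvd : f ∣ X ^ n - 1) : False := by
  have : Fact (Irreducible f) := ⟨hf⟩
  have : FiniteDimensional ℚ E := Module.finite_of_finrank_eq_succ hE
  have : CharZero E := algebraRat.charZero E
  let K := AdjoinRoot f
  have : Module.Finite E K := hm.finite_adjoinRoot
  have hfin : Module.finrank E K = 3 := by
    rw [(AdjoinRoot.powerBasis hf.ne_zero).finrank, AdjoinRoot.powerBasis_dim, hd]
  have hfin6 : Module.finrank ℚ K = 6 := by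
    rw [← Module.finrank_mul_finrank ℚ E K, hE, hfin]
  have : Module.Finite ℚ K := Module.Finite.trans E K
  have : CharZero K := algebraRat.charZero K
  let μ : K := AdjoinRoot.root f
  let ι : E →+* K := algebraMap E K
  have hμ : μ ^ n = 1 := by
    have := map_dvd (AdjoinRoot.mk f) hdvd
    rw [AdjoinRoot.mk_self, zero_dvd_iff] at this
    simpa [sub_eq_zero] using this
  have hζ3 : IsPrimitiveRoot ζ 3 := by
    refine (IsPrimitiveRoot.iff_orderOf).2 (orderOf_eq_prime ?_ ?_)
    · linear_combination (ζ - 1) * hζ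
    · rintro h
      subst h; norm_num at hζ
  have hζK : IsPrimitiveRoot (ι ζ) 3 := hζ3.map_of_injective ι.injective
  have hm0 : orderOf μ ≠ 0 := (orderOf_pos_iff.2 (isOfFinOrder_iff_pow_eq_one.2 ⟨n, hn, hμ⟩)).ne'
  have hω := (IsPrimitiveRoot.orderOf μ).pow_mul_pow_lcm hζK hm0 (by norm_num)
  set N := (orderOf μ).lcm 3
  have hNpos : 0 < N := Nat.lcm_pos (Nat.pos_of_ne_zero hm0) (by norm_num)
  have htot : N.totient ∣ 6 := by
    rw [← hfin6]
    exact totient_dvd_finrank hNpos hω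
  have h18 : μ ^ 18 = 1 := orderOf_dvd_iff_pow_eq_one.1
    ((Nat.dvd_lcm_left _ 3).trans (dvd_eighteen (Nat.dvd_lcm_right _ 3) htot))
  obtain ⟨e, he⟩ : ∃ e : E, μ ^ 3 = ι e := by
    have hz : (ι ζ) ^ 2 + ι ζ + 1 = 0 := by simpa using congrArg ι hζ
    have : (μ ^ 3 - 1) * (μ ^ 3 + 1) * (μ ^ 3 - ι ζ) * (μ ^ 3 + ι ζ) * (μ ^ 3 + 1 + ι ζ) *
        (μ ^ 3 - 1 - ι ζ) = 0 := by
      have e1 : (μ ^ 3 - ι ζ) * (μ ^ 3 + 1 + ι ζ) = (μ ^ 3) ^ 2 + μ ^ 3 + 1 := by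
        linear_combination -hz
      have e2 : (μ ^ 3 + ι ζ) * (μ ^ 3 - 1 - ι ζ) = (μ ^ 3) ^ 2 - μ ^ 3 + 1 := by
        linear_combination -hz
      linear_combination h18 + (μ ^ 3 - 1) * (μ ^ 3 + 1) * ((μ ^ 3 + ι ζ) * (μ ^ 3 - 1 - ι ζ)) * e1
        + (μ ^ 3 - 1) * (μ ^ 3 + 1) * ((μ ^ 3) ^ 2 + μ ^ 3 + 1) * e2
    simp only [mul_eq_zero] at this
    rcases this with ((((h | h) | h) | h) | h) | h
    · exact ⟨1, by rw [map_one]; linear_combination h⟩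
    · exact ⟨-1, by rw [map_neg, map_one]; linear_combination h⟩
    · exact ⟨ζ, by linear_combination h⟩
    · exact ⟨-ζ, by rw [map_neg]; linear_combination h⟩
    · exact ⟨-1 - ζ, by simp only [map_neg, map_sub, map_one]; linear_combination h⟩
    · exact ⟨1 + ζ, by simp only [map_add, map_one]; linear_combination h⟩
  have hfX : f ∣ X ^ 3 - C e := by
    rw [← AdjoinRoot.mk_eq_zero]
    rw [map_sub, map_pow, AdjoinRoot.mk_X, AdjoinRoot.mk_C, sub_eq_zero]
    exact he
  have hfe : f = X ^ 3 - C e := by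
    refine (eq_of_monic_of_dvd_of_natDegree_le hm (monic_X_pow_sub_C e (by norm_num)) hfX ?_).symm
    rw [hd, natDegree_X_pow_sub_C]
  have he1 : e = 1 := by
    rw [hfe] at h0
    simpa using h0
  subst he1
  have hroot : f.IsRoot 1 := by rw [hfe]; simp
  have := degree_eq_one_of_irreducible_of_root hf hroot
  rw [degree_eq_natDegree hf.ne_zero, hd] at this
  norm_num at this

/-- Left multiplication by `z` on the cyclic algebra `L ⊕ Lz ⊕ Lz²` (with `z³ = a` and
`z x = ρ(x) z`), in the coordinates `(v₀, v₁, v₂) ↦ v₀ + v₁ z + v₂ z²`. The rows of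
`gmat ρ a l0 l1 l2` are the iterates of this map at `(l0, l1, l2)`. -/
def shift {L : Type*} [Field L] (ρ : L →+* L) (a : L) : (Fin 3 → L) →ₛₗ[ρ] (Fin 3 → L) where
  toFun v := ![a * ρ (v 2), ρ (v 0), ρ (v 1)]
  map_add' v w := by ext i; fin_cases i <;> simp [mul_add]
  map_smul' c v := by ext i; fin_cases i <;> simp <;> ring

/-- The cyclic algebra is a division algebra when `a` is not a norm: a singular `gmat` has linearly
dependent rows, to which `cubic_dep` applies. -/
lemma eq_zero_of_det {L : Type*} [Field L] (ρ : L →+* L) (hρ3 : ∀ x, ρ (ρ (ρ x)) = x)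
    (a : L) (ha : ρ a = a) (hnn : ¬∃ x : L, NormLE ρ x = a)
    (l0 l1 l2 : L) (hdet : (gmat ρ a l0 l1 l2).det = 0) : l0 = 0 ∧ l1 = 0 ∧ l2 = 0 := by
  by_contra hne
  obtain ⟨c, hc, hc0⟩ := Matrix.exists_vecMul_eq_zero_iff.2 hdet
  refine hnn (cubic_dep ρ a ha (shift ρ a) ?_ ![l0, l1, l2] ?_ (c 0) (c 1) (c 2) ?_ ?_)
  · intro v
    ext i
    fin_cases i <;> simp [shift, ha, hρ3]
  · contrapose! hne
    exact ⟨congrFun hne 0, congrFun hne 1, congrFun hne 2⟩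
  · contrapose! hc
    ext i
    fin_cases i
    exacts [hc.1, hc.2.1, hc.2.2]
  · ext i
    have := congrFun hc0 i
    rw [Matrix.vecMul, dotProduct, Fin.sum_univ_three] at this
    fin_cases i <;> simpa [gmat, shift, ha, Matrix.vecMul, dotProduct] using this

lemma det_gmat {L : Type*} [Field L] (ρ : L →+* L) (hρ3 : ∀ x, ρ (ρ (ρ x)) = x)
    (a : L) (l0 l1 l2 : L) : (gmat ρ a l0 l1 l2).det =
      NormLE ρ l0 + a * NormLE ρ l1 + a ^ 2 * NormLE ρ l2
        - a * TrLE ρ (l0 * ρ l1 * ρ (ρ l2)) := by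
  simp only [gmat, NormLE, TrLE, Matrix.det_fin_three, map_mul, hρ3]
  simp
  ring

lemma cayley_hamilton_three {R : Type*} [CommRing R] (M : Matrix (Fin 3) (Fin 3) R) :
    M ^ 3 - (M 0 0 + M 1 1 + M 2 2) • M ^ 2 + (M 0 0 * M 1 1 - M 0 1 * M 1 0 +
      (M 0 0 * M 2 2 - M 0 2 * M 2 0) + (M 1 1 * M 2 2 - M 1 2 * M 2 1)) • M -
      M.det • (1 : Matrix (Fin 3) (Fin 3) R) = 0 := by
  ext i j
  rw [Matrix.det_fin_three]
  fin_cases i <;> fin_cases j <;>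
    (simp [pow_succ, Matrix.mul_apply, Fin.sum_univ_three]; ring)

end Helpers

theorem stmt_19
    {L : Type*} [Field L] [NumberField L] [IsGalois ℚ L]
    (σ : L ≃ₐ[ℚ] L) (hgen : ∀ g : L ≃ₐ[ℚ] L, g ∈ Subgroup.zpowers σ)
    (hord : orderOf σ = 6)
    (ρ τ : L → L) (hρ : ∀ x, ρ x = (σ ^ 2) x) (hτ : ∀ x, τ x = (σ ^ 3) x)
    (s : L) (hsE : ρ s = s) (hs2 : s ^ 2 = -3)
    (a : L) (ha : a ≠ 0) (haE : ρ a = a)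
    (haζ : a = (-1 + s) / 2 ∨ a = ((-1 + s) / 2) ^ 2)
    (hab : a * τ a = 1)
    (hnn : ¬∃ x : L, NormLE ρ x = a) :
    ∀ l0 l1 l2 : L, IsSpecialUnitaryCoeffs ρ τ a 1 l0 l1 l2 →
      IsOfFinOrder (gmat ρ a l0 l1 l2) →
      l1 = 0 ∧ l2 = 0 ∧
        (l0 = 1 ∨ l0 = (-1 + s) / 2 ∨ l0 = ((-1 + s) / 2) ^ 2) := by
  intro l0 l1 l2 ⟨_, hdet⟩ hfo
  let r : L →+* L := ((σ ^ 2 : L ≃ₐ[ℚ] L) : L →+* L)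
  obtain rfl : ρ = r := funext hρ
  have hσ6 : σ ^ 6 = 1 := hord ▸ pow_orderOf_eq_one σ
  have hρ3 : ∀ x, r (r (r x)) = x := by
    intro x
    change (σ ^ 2 * (σ ^ 2 * σ ^ 2)) x = x
    rw [← pow_add, ← pow_add, hσ6]; rfl
  set ζ : L := (-1 + s) / 2 with hζdef
  have hζ : ζ ^ 2 + ζ + 1 = 0 := by rw [hζdef]; linear_combination hs2 / 4
  have hrζ : r ζ = ζ := by
    simp [hζdef, hsE, map_ofNat r 2]
  have hD := det_gmat r hρ3 a l0 l1 l2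
  rw [hdet] at hD
  -- If `g` has an eigenvalue `x ∈ E`, then `g - x` is a singular element, so `g = x`.
  have hscalar : ∀ x : L, r x = x → (gmat r a (l0 - x) l1 l2).det = 0 →
      l1 = 0 ∧ l2 = 0 ∧ (l0 = 1 ∨ l0 = ζ ∨ l0 = ζ ^ 2) := by
    intro x hx hx0
    obtain ⟨h0, rfl, rfl⟩ := eq_zero_of_det r hρ3 a haE hnn _ _ _ hx0
    obtain rfl : l0 = x := sub_eq_zero.1 h0
    refine ⟨rfl, rfl, ?_⟩
    have h3 : l0 ^ 3 = 1 := by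
      simp only [NormLE, TrLE, hx, map_zero, mul_zero] at hdet
      linear_combination hdet
    have : (l0 - 1) * ((l0 - ζ) * (l0 - ζ ^ 2)) = 0 := by
      linear_combination h3 + (l0 - 1) * (-l0 + ζ - 1) * hζ
    simpa [sub_eq_zero] using this
  by_contra hcon
  let E := IntermediateField.fixedField (Subgroup.zpowers (σ ^ 2))
  have hE : Module.finrank ℚ E = 2 := by
    have h1 : Module.finrank E L = 3 := by
      rw [IntermediateField.finrank_fixedField_eq_card, Nat.card_zpowers,
        orderOf_pow, hord]
      rfl
    have h2 : Module.finrank ℚ L = 6 := by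
      rw [← IsGalois.card_aut_eq_finrank, ← hord]
      exact (orderOf_eq_card_of_forall_mem_zpowers hgen).symm
    have := Module.finrank_mul_finrank ℚ E L
    rw [h1, h2] at this
    omega
  have hfix : ∀ x : L, r x = x → x ∈ E := by
    intro x hx
    rintro ⟨g, hg⟩
    have : Subgroup.zpowers (σ ^ 2) ≤ MulAction.stabilizer (L ≃ₐ[ℚ] L) x := by
      rw [Subgroup.zpowers_le]; exact hx
    exact this hg
  have hfix' : ∀ x : E, r x = x := fun x => x.2 ⟨σ ^ 2, Subgroup.mem_zpowers _⟩
  set M := gmat r a l0 l1 l2 with hM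
  obtain ⟨t, ht⟩ : ∃ t : E, (t : L) = M 0 0 + M 1 1 + M 2 2 := by
    refine ⟨⟨_, hfix (M 0 0 + M 1 1 + M 2 2) ?_⟩, rfl⟩
    simp [hM, gmat, hρ3]; ring
  obtain ⟨e, he⟩ : ∃ e : E, (e : L) = M 0 0 * M 1 1 - M 0 1 * M 1 0 +
      (M 0 0 * M 2 2 - M 0 2 * M 2 0) + (M 1 1 * M 2 2 - M 1 2 * M 2 1) := by
    refine ⟨⟨_, hfix (M 0 0 * M 1 1 - M 0 1 * M 1 0 +
      (M 0 0 * M 2 2 - M 0 2 * M 2 0) + (M 1 1 * M 2 2 - M 1 2 * M 2 1)) ?_⟩, rfl⟩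
    simp [hM, gmat, hρ3, haE]; ring
  have hCH := cayley_hamilton_three M
  rw [← ht, ← he, hD, one_smul] at hCH
  let f : Polynomial E := Cubic.toPoly ⟨1, -t, e, -1⟩
  have hd : f.natDegree = 3 := Cubic.natDegree_of_a_ne_zero' one_ne_zero
  have hm : f.Monic := Cubic.monic_of_a_eq_one'
  have hf0 : f.coeff 0 = -1 := Cubic.coeff_eq_d
  have hfM : Polynomial.aeval M f = 0 := by
    rw [← hCH]
    simp [f, Cubic.toPoly, Algebra.algebraMap_eq_smul_one, sub_eq_add_neg]
    rfl
  have hirr : Irreducible f := by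
    rw [hm.irreducible_iff_roots_eq_zero_of_degree_le_three (by omega) (by omega),
      Multiset.eq_zero_iff_forall_notMem]
    intro x hx
    have hx0 := (Polynomial.mem_roots'.1 hx).2
    refine hcon (hscalar x (hfix' x) ?_)
    have hx1 : (x : L) ^ 3 - t * x ^ 2 + e * x - 1 = 0 := by
      have := congrArg (algebraMap E L) hx0
      simp [f, Cubic.toPoly] at this
      linear_combination this
    rw [ht, he, ← hD, hM, Matrix.det_fin_three] at hx1
    rw [Matrix.det_fin_three]
    simp [gmat, hfix'] at hx1 ⊢
    linear_combination -hx1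
  obtain ⟨n, hn, hMn⟩ := isOfFinOrder_iff_pow_eq_one.1 hfo
  refine no_irred hE ⟨ζ, hfix ζ hrζ⟩ (Subtype.ext hζ) f hirr hm hd hf0 n hn ?_
  rw [minpoly.eq_of_irreducible_of_monic hirr hfM hm]
  apply minpoly.dvd
  simp [hMn]
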